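/- (Lemma 1.5(1)) Let f : M → X be a continuous map between topological spaces with X Hausdorff, and let U ⊆ X be an open set with Bd f ⊆ U. Then the restriction of f to M \ f⁻¹(U) is proper: for every compact subset A ⊆ X, the set (M \ f⁻¹(U)) ∩ f⁻¹(A) is compact. -/

import Mathlib

open Set

/-- The boundary of a map `f : M → X`: the intersection, over all compact subsets
`K ⊆ M`, of the closures in `X` of the images `f(M \ K)`. -/
def mapBd {M X : Type*} [TopologicalSpace M] [TopologicalSpace X] (f : M → X) : Set X :=
  ⋂ (K : Set M) (_ : IsCompact K), closure (f '' Kᶜ)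

/-!
The boundary of `f` is the set of cluster points of `f` along the cocompact filter of `M`. By
compactness, a compact set missing it has a neighbourhood that `f` eventually leaves along that
filter, so its preimage lies in a compact set.
-/

section Boundary

open Filter Topology

variable {M X : Type*} [TopologicalSpace M] [TopologicalSpace X] {f : M → X} {A C U : Set X}

theorem mem_mapBd_iff_mapClusterPt {x : X} :
    x ∈ mapBd f ↔ MapClusterPt x (cocompact M) f := by
  rw [mapClusterPt_def, (hasBasis_cocompact.map f).clusterPt_iff_forall_mem_closure]
  simp only [mapBd, mem_iInter]

theorem compl_preimage_mem_cocompact_of_disjoint_mapBd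
    (hC : IsCompact C) (hCf : Disjoint C (mapBd f)) : (f ⁻¹' C)ᶜ ∈ cocompact M := by
  have disjoint_nhds : ∀ x ∈ C, Disjoint (𝓝 x) (map f (cocompact M)) := by
    intro x hx
    by_contra h
    exact disjoint_left.mp hCf hx
      (mem_mapBd_iff_mapClusterPt.mpr (clusterPt_iff_not_disjoint.mpr h))
  have disjoint_nhdsSet : Disjoint (𝓝ˢ C) (map f (cocompact M)) :=
    hC.disjoint_nhdsSet_left.mpr disjoint_nhds
  have disjoint_principal : Disjoint (𝓟 C) (map f (cocompact M)) :=
    disjoint_nhdsSet.mono_left principal_le_nhdsSet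
  exact mem_map.mp (disjoint_principal_left.mp disjoint_principal)

theorem isCompact_preimage_of_disjoint_mapBd (hf : Continuous f) (hC : IsCompact C)
    (hC_closed : IsClosed C) (hCf : Disjoint C (mapBd f)) : IsCompact (f ⁻¹' C) := by
  obtain ⟨K, hK, hCK⟩ :=
    mem_cocompact.mp (compl_preimage_mem_cocompact_of_disjoint_mapBd hC hCf)
  exact hK.of_isClosed_subset (hC_closed.preimage hf) (compl_subset_compl.mp hCK)

theorem restriction_proper_of_nbhd_of_mapBd_general (hf : Continuous f) (hU : IsOpen U)
    (hBdU : mapBd f ⊆ U) (hA : IsCompact A) (hA_closed : IsClosed A) :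
    IsCompact ((f ⁻¹' U)ᶜ ∩ f ⁻¹' A) := by
  rw [← preimage_compl, ← preimage_inter]
  exact isCompact_preimage_of_disjoint_mapBd hf (hA.inter_left hU.isClosed_compl)
    (hU.isClosed_compl.inter hA_closed)
    ((disjoint_compl_left_iff_subset.mpr hBdU).mono_left inter_subset_left)

end Boundary

theorem restriction_proper_of_nbhd_of_mapBd
    {M X : Type*} [TopologicalSpace M] [TopologicalSpace X] [T2Space X]
    (f : M → X) (hf : Continuous f)
    (U : Set X) (hU : IsOpen U) (hBdU : mapBd f ⊆ U) :
    ∀ A : Set X, IsCompact A → IsCompact ((f ⁻¹' U)ᶜ ∩ f ⁻¹' A) :=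
  fun _ hA ↦ restriction_proper_of_nbhd_of_mapBd_general hf hU hBdU hA hA.isClosed
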